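/- arXiv:2002.00689 — 7 statements merged into one kernel-verified Lean document; each statement's English description precedes it below -/
import Mathlib

section
/- Let Δ = (E,H) and Δ̃ = (Ẽ,H̃) be linear DAEs with matrices in ℝ^{l×n} such that rank E = rank Ẽ = q. Let Λ = (A,B,C,D) be a (Q,P)-explicitation of Δ and Λ̃ = (Ã,B̃,C̃,D̃) be a (Q̃,P̃)-explicitation of Δ̃. Then Δ and Δ̃ are ex-equivalent if and only if Λ and Λ̃ are Morse equivalent. -/
noncomputable section

open Matrix

/-- Two DAEs `(E,H)` and `(E',H')` (same sizes) are externally equivalent: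
there exist invertible `Q, P` with `E' = Q E P⁻¹` and `H' = Q H P⁻¹`. -/
def ExEquiv {L N : Type*} [Fintype L] [Fintype N] [DecidableEq L] [DecidableEq N]
    (E H E' H' : Matrix L N ℝ) : Prop :=
  ∃ (Q : Matrix L L ℝ) (P : Matrix N N ℝ), IsUnit Q.det ∧ IsUnit P.det ∧
    E' = Q * E * P⁻¹ ∧ H' = Q * H * P⁻¹

/-- Morse equivalence of two control systems `(A,B,C,D)` and `(A',B',C',D')`. -/
def MorseEquiv {q m p : ℕ}
    (A A' : Matrix (Fin q) (Fin q) ℝ) (B B' : Matrix (Fin q) (Fin m) ℝ)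
    (C C' : Matrix (Fin p) (Fin q) ℝ) (D D' : Matrix (Fin p) (Fin m) ℝ) : Prop :=
  ∃ (Ts : Matrix (Fin q) (Fin q) ℝ) (Ti : Matrix (Fin m) (Fin m) ℝ)
    (To : Matrix (Fin p) (Fin p) ℝ) (F : Matrix (Fin m) (Fin q) ℝ)
    (K : Matrix (Fin q) (Fin p) ℝ),
    IsUnit Ts.det ∧ IsUnit Ti.det ∧ IsUnit To.det ∧
    Matrix.fromBlocks A' B' C' D' =
      Matrix.fromBlocks Ts (Ts * K) 0 To * Matrix.fromBlocks A B C D *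
        Matrix.fromBlocks Ts⁻¹ 0 (F * Ts⁻¹) Ti⁻¹

/-- `Λ = (A,B,C,D)` is the `(Q,P)`-explicitation of the DAE `Δ = (E,H)`. -/
def IsQPExplicitation {q m p : ℕ} (E H : Matrix (Fin q ⊕ Fin p) (Fin q ⊕ Fin m) ℝ)
    (Q : Matrix (Fin q ⊕ Fin p) (Fin q ⊕ Fin p) ℝ)
    (P : Matrix (Fin q ⊕ Fin m) (Fin q ⊕ Fin m) ℝ)
    (A : Matrix (Fin q) (Fin q) ℝ) (B : Matrix (Fin q) (Fin m) ℝ)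
    (C : Matrix (Fin p) (Fin q) ℝ) (D : Matrix (Fin p) (Fin m) ℝ) : Prop :=
  Q * E * P⁻¹ = Matrix.fromBlocks 1 0 0 0 ∧ Q * H * P⁻¹ = Matrix.fromBlocks A B C D

theorem ExEquiv.symm {L N : Type*} [Fintype L] [Fintype N] [DecidableEq L] [DecidableEq N]
    {E H E' H' : Matrix L N ℝ} (h : ExEquiv E H E' H') : ExEquiv E' H' E H := by
  obtain ⟨Q, P, hQ, hP, rfl, rfl⟩ := h
  refine ⟨Q⁻¹, P⁻¹, isUnit_nonsing_inv_det Q hQ, isUnit_nonsing_inv_det P hP, ?_, ?_⟩ <;>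
  rw [nonsing_inv_nonsing_inv P hP, Matrix.mul_assoc Q, nonsing_inv_mul_cancel_left Q _ hQ,
    nonsing_inv_mul_cancel_right P _ hP]

theorem ExEquiv.trans {L N : Type*} [Fintype L] [Fintype N] [DecidableEq L] [DecidableEq N]
    {E H E' H' E'' H'' : Matrix L N ℝ} (h : ExEquiv E H E' H') (h' : ExEquiv E' H' E'' H'') :
    ExEquiv E H E'' H'' := by
  obtain ⟨Q, P, hQ, hP, rfl, rfl⟩ := h
  obtain ⟨Q', P', hQ', hP', rfl, rfl⟩ := h'
  refine ⟨Q' * Q, P' * P, ?_, ?_, ?_, ?_⟩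
  · rw [det_mul]; exact hQ'.mul hQ
  · rw [det_mul]; exact hP'.mul hP
  all_goals simp only [Matrix.mul_inv_rev, Matrix.mul_assoc]

theorem IsQPExplicitation.exEquiv {q m p : ℕ}
    {E H : Matrix (Fin q ⊕ Fin p) (Fin q ⊕ Fin m) ℝ}
    {Q : Matrix (Fin q ⊕ Fin p) (Fin q ⊕ Fin p) ℝ}
    {P : Matrix (Fin q ⊕ Fin m) (Fin q ⊕ Fin m) ℝ}
    {A : Matrix (Fin q) (Fin q) ℝ} {B : Matrix (Fin q) (Fin m) ℝ}
    {C : Matrix (Fin p) (Fin q) ℝ} {D : Matrix (Fin p) (Fin m) ℝ}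
    (h : IsQPExplicitation E H Q P A B C D) (hQ : IsUnit Q.det) (hP : IsUnit P.det) :
    ExEquiv E H (fromBlocks 1 0 0 0) (fromBlocks A B C D) :=
  ⟨Q, P, hQ, hP, h.1.symm, h.2.symm⟩

/-- The inverse of an invertible block lower triangular matrix. -/
theorem inv_fromBlocks_zero_upper_right {m n R : Type*} [Fintype m] [Fintype n]
    [DecidableEq m] [DecidableEq n] [CommRing R]
    {A : Matrix m m R} {C : Matrix n m R} {D : Matrix n n R}
    (hA : IsUnit A.det) (hD : IsUnit D.det) :
    (fromBlocks A 0 C D)⁻¹ = fromBlocks A⁻¹ 0 (-(D⁻¹ * C * A⁻¹)) D⁻¹ :=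
  inv_fromBlocks_zero₁₂_of_isUnit_iff A C D
    (iff_of_true ((isUnit_iff_isUnit_det A).2 hA) ((isUnit_iff_isUnit_det D).2 hD))

/-- The stabilizer of the pencil part `diag(I, 0)` consists of block triangular matrices sharing
their first diagonal block. -/
theorem fromBlocks_one_zero_intertwine_iff {q m p R : Type*} [Fintype q] [Fintype m] [Fintype p]
    [DecidableEq q] [CommRing R]
    {U₁ V₁ : Matrix q q R} {U₂ : Matrix q p R} {U₃ : Matrix p q R} {U₄ : Matrix p p R}
    {V₂ : Matrix q m R} {V₃ : Matrix m q R} {V₄ : Matrix m m R} :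
    (fromBlocks 1 0 0 0 : Matrix (q ⊕ p) (q ⊕ m) R) * fromBlocks V₁ V₂ V₃ V₄ =
        fromBlocks U₁ U₂ U₃ U₄ * (fromBlocks 1 0 0 0 : Matrix (q ⊕ p) (q ⊕ m) R) ↔
      V₁ = U₁ ∧ V₂ = 0 ∧ U₃ = 0 := by
  simp [fromBlocks_multiply, fromBlocks_inj, eq_comm]

theorem exEquiv_fromBlocks_iff_morseEquiv {q m p : ℕ}
    (A A' : Matrix (Fin q) (Fin q) ℝ) (B B' : Matrix (Fin q) (Fin m) ℝ)
    (C C' : Matrix (Fin p) (Fin q) ℝ) (D D' : Matrix (Fin p) (Fin m) ℝ) :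
    ExEquiv (fromBlocks 1 0 0 0) (fromBlocks A B C D) (fromBlocks 1 0 0 0)
      (fromBlocks A' B' C' D') ↔ MorseEquiv A A' B B' C C' D D' := by
  constructor
  · rintro ⟨U, V, hU, hV, hJ, hM⟩
    have hJV : (fromBlocks 1 0 0 0 : Matrix (Fin q ⊕ Fin p) (Fin q ⊕ Fin m) ℝ) * V =
        U * fromBlocks 1 0 0 0 := by
      conv_lhs => rw [hJ]
      exact nonsing_inv_mul_cancel_right V _ hV
    obtain ⟨U₁, U₂, U₃, U₄, rfl⟩ : ∃ U₁ U₂ U₃ U₄, U = fromBlocks U₁ U₂ U₃ U₄ :=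
      ⟨_, _, _, _, (fromBlocks_toBlocks U).symm⟩
    obtain ⟨V₁, V₂, V₃, V₄, rfl⟩ : ∃ V₁ V₂ V₃ V₄, V = fromBlocks V₁ V₂ V₃ V₄ :=
      ⟨_, _, _, _, (fromBlocks_toBlocks V).symm⟩
    obtain ⟨rfl, rfl, rfl⟩ := fromBlocks_one_zero_intertwine_iff.1 hJV
    rw [det_fromBlocks_zero₂₁, IsUnit.mul_iff] at hU
    rw [det_fromBlocks_zero₁₂, IsUnit.mul_iff] at hV
    refine ⟨V₁, V₄, U₄, -(V₄⁻¹ * V₃), V₁⁻¹ * U₂, hV.1, hV.2, hU.2, ?_⟩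
    rw [hM, inv_fromBlocks_zero_upper_right hV.1 hV.2, mul_nonsing_inv_cancel_left V₁ _ hV.1,
      Matrix.neg_mul]
  · rintro ⟨Ts, Ti, To, F, K, hs, hi, ho, hM⟩
    have hV : IsUnit (fromBlocks Ts 0 (-(Ti * F)) Ti).det := by
      rw [det_fromBlocks_zero₁₂]; exact hs.mul hi
    refine ⟨fromBlocks Ts (Ts * K) 0 To, fromBlocks Ts 0 (-(Ti * F)) Ti, ?_, hV, ?_, ?_⟩
    · rw [det_fromBlocks_zero₂₁]; exact hs.mul ho
    · rw [← fromBlocks_one_zero_intertwine_iff.2 ⟨rfl, rfl, rfl⟩,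
        mul_nonsing_inv_cancel_right _ _ hV]
    · rw [hM, inv_fromBlocks_zero_upper_right hs hi, Matrix.mul_neg,
        nonsing_inv_mul_cancel_left Ti _ hi, Matrix.neg_mul, neg_neg]

/-- Two DAEs are ex-equivalent iff their explicitations are
Morse equivalent. -/
theorem stmt1 {q m p : ℕ}
    (E H E' H' : Matrix (Fin q ⊕ Fin p) (Fin q ⊕ Fin m) ℝ)
    (hE : E.rank = q) (hE' : E'.rank = q)
    (Q : Matrix (Fin q ⊕ Fin p) (Fin q ⊕ Fin p) ℝ)
    (P : Matrix (Fin q ⊕ Fin m) (Fin q ⊕ Fin m) ℝ)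
    (Q' : Matrix (Fin q ⊕ Fin p) (Fin q ⊕ Fin p) ℝ)
    (P' : Matrix (Fin q ⊕ Fin m) (Fin q ⊕ Fin m) ℝ)
    (hQ : IsUnit Q.det) (hP : IsUnit P.det) (hQ' : IsUnit Q'.det) (hP' : IsUnit P'.det)
    (A A' : Matrix (Fin q) (Fin q) ℝ) (B B' : Matrix (Fin q) (Fin m) ℝ)
    (C C' : Matrix (Fin p) (Fin q) ℝ) (D D' : Matrix (Fin p) (Fin m) ℝ)
    (hexp : IsQPExplicitation E H Q P A B C D)
    (hexp' : IsQPExplicitation E' H' Q' P' A' B' C' D') :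
    ExEquiv E H E' H' ↔ MorseEquiv A A' B B' C C' D D' := by
  rw [← exEquiv_fromBlocks_iff_morseEquiv]
  have h := hexp.exEquiv hQ hP
  have h' := hexp'.exEquiv hQ' hP'
  exact ⟨fun g => (h.symm.trans g).trans h', fun g => (h.trans g).trans h'.symm⟩
end
end

section
/- Let Λ = (A,B,C,D) and Λ̃ = (Ã,B̃,C̃,D̃) be two linear control systems with the same numbers of states q, inputs m and outputs p. Then Λ and Λ̃ are Morse equivalent if and only if their implicitations Impl(Λ) and Impl(Λ̃) are ex-equivalent. -/
noncomputable section

open Matrix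

/-- The `E`-matrix of the implicitation `Impl(Λ)`. -/
def implE (q m p : ℕ) : Matrix (Fin q ⊕ Fin p) (Fin q ⊕ Fin m) ℝ :=
  Matrix.fromBlocks 1 0 0 0

/-- The `H`-matrix of the implicitation `Impl(Λ)`. -/
def implH {q m p : ℕ} (A : Matrix (Fin q) (Fin q) ℝ) (B : Matrix (Fin q) (Fin m) ℝ)
    (C : Matrix (Fin p) (Fin q) ℝ) (D : Matrix (Fin p) (Fin m) ℝ) :
    Matrix (Fin q ⊕ Fin p) (Fin q ⊕ Fin m) ℝ :=
  Matrix.fromBlocks A B C D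

/-- Two control systems are Morse equivalent iff their
implicitations are ex-equivalent. -/
theorem stmt2 {q m p : ℕ}
    (A A' : Matrix (Fin q) (Fin q) ℝ) (B B' : Matrix (Fin q) (Fin m) ℝ)
    (C C' : Matrix (Fin p) (Fin q) ℝ) (D D' : Matrix (Fin p) (Fin m) ℝ) :
    MorseEquiv A A' B B' C C' D D' ↔
      ExEquiv (implE q m p) (implH A B C D) (implE q m p) (implH A' B' C' D') := by
  constructor
  · rintro ⟨Ts, Ti, To, F, K, hTs, hTi, hTo, hH⟩
    have hR : IsUnit (fromBlocks Ts⁻¹ 0 (F * Ts⁻¹) Ti⁻¹).det := by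
      rw [det_fromBlocks_zero₁₂]
      exact (isUnit_nonsing_inv_det _ hTs).mul (isUnit_nonsing_inv_det _ hTi)
    refine ⟨fromBlocks Ts (Ts * K) 0 To, (fromBlocks Ts⁻¹ 0 (F * Ts⁻¹) Ti⁻¹)⁻¹,
      ?_, isUnit_nonsing_inv_det _ hR, ?_, ?_⟩
    · rw [det_fromBlocks_zero₂₁]
      exact hTs.mul hTo
    · rw [nonsing_inv_nonsing_inv _ hR]
      simp [implE, fromBlocks_multiply, mul_nonsing_inv _ hTs]
    · rwa [nonsing_inv_nonsing_inv _ hR]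
  · rintro ⟨Q, P, hQ, hP, hE, hH⟩
    have hR := isUnit_nonsing_inv_det _ hP
    generalize P⁻¹ = R at hE hH hR
    obtain ⟨Q₁, Q₂, Q₃, Q₄, rfl⟩ : ∃ Q₁ Q₂ Q₃ Q₄, Q = fromBlocks Q₁ Q₂ Q₃ Q₄ :=
      ⟨_, _, _, _, (fromBlocks_toBlocks Q).symm⟩
    obtain ⟨R₁, R₂, R₃, R₄, rfl⟩ : ∃ R₁ R₂ R₃ R₄, R = fromBlocks R₁ R₂ R₃ R₄ :=
      ⟨_, _, _, _, (fromBlocks_toBlocks R).symm⟩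
    simp only [implE, fromBlocks_multiply, fromBlocks_inj, Matrix.mul_one, Matrix.mul_zero,
      Matrix.zero_mul, add_zero] at hE
    obtain ⟨h₁₁, h₁₂, h₂₁, -⟩ := hE
    have hRQ : R₁ * Q₁ = 1 := mul_eq_one_comm.mp h₁₁.symm
    have hR₂ : R₂ = 0 := by
      rw [← Matrix.one_mul R₂, ← hRQ, Matrix.mul_assoc, ← h₁₂, Matrix.mul_zero]
    have hQ₃ : Q₃ = 0 := by
      rw [← Matrix.mul_one Q₃, ← hRQ, ← Matrix.mul_assoc, ← h₂₁, Matrix.zero_mul]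
    subst hR₂ hQ₃
    rw [det_fromBlocks_zero₂₁, IsUnit.mul_iff] at hQ
    rw [det_fromBlocks_zero₁₂, IsUnit.mul_iff] at hR
    refine ⟨Q₁, R₄⁻¹, Q₄, R₃ * Q₁, Q₁⁻¹ * Q₂, hQ.1, isUnit_nonsing_inv_det _ hR.2, hQ.2, ?_⟩
    rwa [nonsing_inv_nonsing_inv _ hR.2, mul_nonsing_inv_cancel_left _ _ hQ.1,
      mul_nonsing_inv_cancel_right _ _ hQ.1, inv_eq_left_inv hRQ]
end
end

section
/- Let Δ = (E,H) with E,H ∈ ℝ^{l×n} and let 𝒱* be the limit of its first Wong sequence. Then 𝒱* is the largest subspace 𝒱 ⊆ ℝⁿ such that H𝒱 ⊆ E𝒱; that is, H𝒱* ⊆ E𝒱* and every subspace 𝒱 with H𝒱 ⊆ E𝒱 satisfies 𝒱 ⊆ 𝒱*. -/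
noncomputable section

open Matrix

/-- The first Wong sequence of the DAE `Δ = (E,H)`:
`𝒱₀ = ℝⁿ`, `𝒱_{i+1} = H⁻¹(E 𝒱_i)`. -/
def wongV {L N : Type*} [Fintype L] [Fintype N] (E H : Matrix L N ℝ) :
    ℕ → Submodule ℝ (N → ℝ)
  | 0 => ⊤
  | i + 1 => Submodule.comap H.mulVecLin (Submodule.map E.mulVecLin (wongV E H i))

/-- The first Wong sequence is non-increasing. -/
theorem wongV_succ_le {L N : Type*} [Fintype L] [Fintype N] (E H : Matrix L N ℝ) (i : ℕ) :
    wongV E H (i + 1) ≤ wongV E H i := by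
  induction i with
  | zero => exact le_top
  | succ i ih => exact Submodule.comap_mono (Submodule.map_mono ih)

/-- At each index, the first Wong sequence either is already stationary or has dropped in
dimension at every step so far. -/
theorem wongV_succ_eq_or_finrank_add_le {L N : Type*} [Fintype L] [Fintype N]
    (E H : Matrix L N ℝ) (i : ℕ) :
    wongV E H (i + 1) = wongV E H i ∨
      Module.finrank ℝ (wongV E H (i + 1)) + (i + 1) ≤ Fintype.card N := by
  have drop (i : ℕ) : wongV E H (i + 1) = wongV E H i ∨
      Module.finrank ℝ (wongV E H (i + 1)) < Module.finrank ℝ (wongV E H i) :=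
    (wongV_succ_le E H i).eq_or_lt.imp_right Submodule.finrank_lt_finrank_of_lt
  induction i with
  | zero =>
    refine (drop 0).imp_right fun h => ?_
    have := (wongV E H 0).finrank_le
    rw [Module.finrank_fintype_fun_eq_card] at this
    omega
  | succ i ih =>
    rcases ih with ih | ih
    · left
      rw [wongV, ih, ← wongV, ih]
    · refine (drop (i + 1)).imp_right fun h => ?_
      omega

/-- The first Wong sequence is stationary from the dimension of the ambient space on. -/
theorem wongV_card_succ {L N : Type*} [Fintype L] [Fintype N] (E H : Matrix L N ℝ) :
    wongV E H (Fintype.card N + 1) = wongV E H (Fintype.card N) :=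
  (wongV_succ_eq_or_finrank_add_le E H _).resolve_right (by omega)

/-- Every subspace `V` with `HV ⊆ EV` lies in all members of the first Wong sequence. -/
theorem le_wongV {L N : Type*} [Fintype L] [Fintype N] {E H : Matrix L N ℝ}
    {V : Submodule ℝ (N → ℝ)}
    (hV : Submodule.map H.mulVecLin V ≤ Submodule.map E.mulVecLin V) (i : ℕ) :
    V ≤ wongV E H i := by
  induction i with
  | zero => exact le_top
  | succ i ih => exact Submodule.map_le_iff_le_comap.mp (hV.trans (Submodule.map_mono ih))

/-- The limit `𝒱* = 𝒱_n` of the first Wong sequence is the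
largest subspace `𝒱 ⊆ ℝⁿ` with `H𝒱 ⊆ E𝒱`. -/
theorem stmt5 {l n : ℕ} (E H : Matrix (Fin l) (Fin n) ℝ) :
    Submodule.map H.mulVecLin (wongV E H n) ≤ Submodule.map E.mulVecLin (wongV E H n) ∧
    (∀ V : Submodule ℝ (Fin n → ℝ),
      Submodule.map H.mulVecLin V ≤ Submodule.map E.mulVecLin V → V ≤ wongV E H n) := by
  refine ⟨Submodule.map_le_iff_le_comap.mpr ?_, fun V hV => le_wongV hV n⟩
  have h := wongV_card_succ E H
  rw [Fintype.card_fin] at h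
  exact h.ge
end
end

section
/- Let Δ = (E,H) with E,H ∈ ℝ^{l×n} and let Δ^d = (Eᵀ,Hᵀ) be its dual DAE. Then a control system Λ = (A,B,C,D) satisfies Λ ∈ Expl(Δ) if and only if the dual system Λ^d = (Aᵀ,Cᵀ,Bᵀ,Dᵀ) satisfies Λ^d ∈ Expl(Δ^d). -/
noncomputable section

open Matrix

/-- Transposing an explicitation `(Q, P)` of `(E, H)` yields the explicitation `(P⁻ᵀ, Q⁻ᵀ)` of
`(Eᵀ, Hᵀ)`. -/
theorem exists_explicitation_transpose {q m p : ℕ}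
    {E H : Matrix (Fin q ⊕ Fin p) (Fin q ⊕ Fin m) ℝ}
    {A : Matrix (Fin q) (Fin q) ℝ} {B : Matrix (Fin q) (Fin m) ℝ}
    {C : Matrix (Fin p) (Fin q) ℝ} {D : Matrix (Fin p) (Fin m) ℝ}
    (h : ∃ (Q : Matrix (Fin q ⊕ Fin p) (Fin q ⊕ Fin p) ℝ)
       (P : Matrix (Fin q ⊕ Fin m) (Fin q ⊕ Fin m) ℝ),
       IsUnit Q.det ∧ IsUnit P.det ∧
       Q * E * P⁻¹ = Matrix.fromBlocks 1 0 0 0 ∧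
       Q * H * P⁻¹ = Matrix.fromBlocks A B C D) :
    ∃ (Q' : Matrix (Fin q ⊕ Fin m) (Fin q ⊕ Fin m) ℝ)
       (P' : Matrix (Fin q ⊕ Fin p) (Fin q ⊕ Fin p) ℝ),
       IsUnit Q'.det ∧ IsUnit P'.det ∧
       Q' * Eᵀ * P'⁻¹ = Matrix.fromBlocks 1 0 0 0 ∧
       Q' * Hᵀ * P'⁻¹ = Matrix.fromBlocks Aᵀ Cᵀ Bᵀ Dᵀ := by
  obtain ⟨Q, P, hQ, hP, hE, hH⟩ := h
  have hQt : IsUnit Qᵀ.det := by rwa [det_transpose]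
  refine ⟨P⁻¹ᵀ, Qᵀ⁻¹, ?_, isUnit_nonsing_inv_det _ hQt, ?_, ?_⟩
  · rw [det_transpose]
    exact isUnit_nonsing_inv_det _ hP
  · rw [nonsing_inv_nonsing_inv _ hQt, Matrix.mul_assoc, ← transpose_mul, ← transpose_mul, hE,
      fromBlocks_transpose]
    simp
  · rw [nonsing_inv_nonsing_inv _ hQt, Matrix.mul_assoc, ← transpose_mul, ← transpose_mul, hH,
      fromBlocks_transpose]

/-- `Λ = (A,B,C,D) ∈ Expl(Δ)` iff the dual system
`Λ^d = (Aᵀ,Cᵀ,Bᵀ,Dᵀ)` belongs to `Expl(Δ^d)`, where `Δ^d = (Eᵀ,Hᵀ)`. -/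
theorem stmt8 {q m p : ℕ}
    (E H : Matrix (Fin q ⊕ Fin p) (Fin q ⊕ Fin m) ℝ) (hE : E.rank = q)
    (A : Matrix (Fin q) (Fin q) ℝ) (B : Matrix (Fin q) (Fin m) ℝ)
    (C : Matrix (Fin p) (Fin q) ℝ) (D : Matrix (Fin p) (Fin m) ℝ) :
    (∃ (Q : Matrix (Fin q ⊕ Fin p) (Fin q ⊕ Fin p) ℝ)
       (P : Matrix (Fin q ⊕ Fin m) (Fin q ⊕ Fin m) ℝ),
       IsUnit Q.det ∧ IsUnit P.det ∧
       Q * E * P⁻¹ = Matrix.fromBlocks 1 0 0 0 ∧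
       Q * H * P⁻¹ = Matrix.fromBlocks A B C D) ↔
    (∃ (Q' : Matrix (Fin q ⊕ Fin m) (Fin q ⊕ Fin m) ℝ)
       (P' : Matrix (Fin q ⊕ Fin p) (Fin q ⊕ Fin p) ℝ),
       IsUnit Q'.det ∧ IsUnit P'.det ∧
       Q' * Eᵀ * P'⁻¹ = Matrix.fromBlocks 1 0 0 0 ∧
       Q' * Hᵀ * P'⁻¹ = Matrix.fromBlocks Aᵀ Cᵀ Bᵀ Dᵀ) := by
  refine ⟨exists_explicitation_transpose, fun h => ?_⟩
  simpa only [transpose_transpose] using exists_explicitation_transpose h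
end
end

section
/- Let Δ = (E,H) with E,H ∈ ℝ^{l×n} and let M ⊆ ℝⁿ be a linear subspace. Then M is an invariant subspace of Δ (i.e., through every point of M there passes a solution of Δ that remains in M for all time) if and only if HM ⊆ EM. -/
noncomputable section

open Matrix

/-- A solution of the DAE `E ẋ = H x`: a differentiable map `x : ℝ → ℝⁿ` with
`E x'(t) = H x(t)` for all `t`. -/
def IsSolution {l n : ℕ} (E H : Matrix (Fin l) (Fin n) ℝ)
    (x : ℝ → (Fin n → ℝ)) : Prop :=
  Differentiable ℝ x ∧ ∀ t : ℝ, E.mulVec (deriv x t) = H.mulVec (x t)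

/-- `M` is an invariant subspace of the DAE `E ẋ = H x`: through every point
of `M` there passes a solution remaining in `M` for all time. -/
def IsInvariantSubspace {l n : ℕ} (E H : Matrix (Fin l) (Fin n) ℝ)
    (M : Submodule ℝ (Fin n → ℝ)) : Prop :=
  ∀ x0 ∈ M, ∃ x : ℝ → (Fin n → ℝ),
    IsSolution E H x ∧ x 0 = x0 ∧ ∀ t : ℝ, x t ∈ M

/-- The derivative of a curve contained in a finite-dimensional subspace lies in it. -/
lemma deriv_mem_of_forall_mem {V : Type*} [NormedAddCommGroup V] [NormedSpace ℝ V]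
    (M : Submodule ℝ V) [FiniteDimensional ℝ M] {x : ℝ → V} (hx : ∀ t, x t ∈ M) (t : ℝ) :
    deriv x t ∈ M := by
  have h := range_deriv_subset_closure_span_image x dense_univ (Set.mem_range_self t)
  have hspan : Submodule.span ℝ (x '' Set.univ) ≤ M := by
    rw [Submodule.span_le]
    rintro _ ⟨s, -, rfl⟩
    exact hx s
  exact closure_minimal hspan M.closed_of_finiteDimensional h

/-- A linear ODE on a finite-dimensional normed space is globally solvable. -/
lemma exists_hasDerivAt_linear {V : Type*} [NormedAddCommGroup V] [NormedSpace ℝ V]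
    [FiniteDimensional ℝ V] (A : V →ₗ[ℝ] V) (v : V) :
    ∃ y : ℝ → V, y 0 = v ∧ ∀ t, HasDerivAt y (A (y t)) t := by
  have : CompleteSpace V := FiniteDimensional.complete ℝ V
  let B : V →L[ℝ] V := LinearMap.toContinuousLinearMap A
  refine ⟨fun t => NormedSpace.exp (t • B) v, by simp, fun t => ?_⟩
  exact (hasDerivAt_exp_smul_const' (𝕂 := ℝ) B t).clm_apply (hasDerivAt_const t v) |>.congr_deriv
    (by simp [B])

/-- If `g` maps into the image of `f`, then it factors through `f`. -/
lemma exists_comp_eq_of_range_le {K P V W : Type*} [Field K] [AddCommGroup P] [Module K P]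
    [AddCommGroup V] [Module K V] [AddCommGroup W] [Module K W] (f : V →ₗ[K] W) (g : P →ₗ[K] W)
    (h : LinearMap.range g ≤ LinearMap.range f) : ∃ A : P →ₗ[K] V, f ∘ₗ A = g := by
  obtain ⟨A, hA⟩ := Module.projective_lifting_property f.rangeRestrict
    (g.codRestrict (LinearMap.range f) fun p => h ⟨p, rfl⟩) f.surjective_rangeRestrict
  exact ⟨A, LinearMap.ext fun p => congrArg Subtype.val (LinearMap.congr_fun hA p)⟩

/-- `M` is an invariant subspace of `Δ = (E,H)` iff `HM ⊆ EM`. -/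
theorem stmt12 {l n : ℕ} (E H : Matrix (Fin l) (Fin n) ℝ)
    (M : Submodule ℝ (Fin n → ℝ)) :
    IsInvariantSubspace E H M ↔
      Submodule.map H.mulVecLin M ≤ Submodule.map E.mulVecLin M := by
  constructor
  · rintro hM _ ⟨x0, hx0, rfl⟩
    obtain ⟨x, ⟨-, hx⟩, rfl, hxM⟩ := hM x0 hx0
    exact ⟨deriv x 0, deriv_mem_of_forall_mem M hxM 0, hx 0⟩
  · intro h x0 hx0
    obtain ⟨A, hA⟩ := exists_comp_eq_of_range_le (E.mulVecLin ∘ₗ M.subtype)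
      (H.mulVecLin ∘ₗ M.subtype) (by simpa [LinearMap.range_comp] using h)
    obtain ⟨y, hy0, hy⟩ := exists_hasDerivAt_linear A ⟨x0, hx0⟩
    have hd (t : ℝ) : HasDerivAt (fun s => (y s : Fin n → ℝ)) (A (y t)) t :=
      M.subtypeL.hasFDerivAt.comp_hasDerivAt t (hy t)
    refine ⟨fun t => y t, ⟨fun t => (hd t).differentiableAt, fun t => ?_⟩, by simp [hy0],
      fun t => (y t).2⟩
    rw [(hd t).deriv]
    exact LinearMap.congr_fun hA (y t)
end
end

section
/- Let Λ = (A,B) and Λ̃ = (Ã,B̃) be linear control systems without outputs, with A,Ã ∈ ℝ^{n×n} and B,B̃ ∈ ℝ^{n×m}. Then the following are equivalent: (a) there exists an invertible matrix T ∈ GL(n+m,ℝ) such that for every pair of differentiable maps (z,u) : ℝ → ℝⁿ × ℝ^m, the pair (z,u) satisfies ż(t) = Az(t) + Bu(t) for all t if and only if the pair (z̃,ũ) defined by (z̃(t),ũ(t)) = T·(z(t),u(t)) satisfies z̃'(t) = Ãz̃(t) + B̃ũ(t) for all t; (b) Λ and Λ̃ are feedback equivalent, i.e., there exist T_s ∈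 GL(n,ℝ), T_i ∈ GL(m,ℝ) and F ∈ ℝ^{m×n} such that Ã = T_s(A + BF)T_s⁻¹ and B̃ = T_s B T_i⁻¹. -/
noncomputable section

open Matrix

/-- Every linear autonomous system `ẇ = M w` has a solution with prescribed initial value. -/
theorem Matrix.exists_hasDerivAt_mulVec {ι : Type*} [Fintype ι] [DecidableEq ι]
    (M : Matrix ι ι ℝ) (w₀ : ι → ℝ) :
    ∃ w : ℝ → ι → ℝ, w 0 = w₀ ∧ ∀ t, HasDerivAt w (M *ᵥ w t) t := by
  let L : (ι → ℝ) →L[ℝ] (ι → ℝ) := LinearMap.toContinuousLinearMap (Matrix.toLin' M)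
  refine ⟨fun t => NormedSpace.exp (t • L) w₀, by simp, fun t => ?_⟩
  have h := (hasDerivAt_exp_smul_const' (𝕂 := ℝ) L t).clm_apply (hasDerivAt_const t w₀)
  simpa [L] using h

/-- The derivative of `t ↦ P (z t) + Q (u t)` for differentiable `z` and `u`. -/
theorem Matrix.hasDerivAt_mulVec_add_mulVec {ι κ l : Type*} [Fintype ι] [Fintype κ] [Fintype l]
    (P : Matrix l ι ℝ) (Q : Matrix l κ ℝ) {z : ℝ → ι → ℝ} {u : ℝ → κ → ℝ}
    {z' : ι → ℝ} {u' : κ → ℝ} {t : ℝ} (hz : HasDerivAt z z' t) (hu : HasDerivAt u u' t) :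
    HasDerivAt (fun s => P *ᵥ z s + Q *ᵥ u s) (P *ᵥ z' + Q *ᵥ u') t :=
  (P.mulVecLin.toContinuousLinearMap.hasFDerivAt.comp_hasDerivAt t hz).add
    (Q.mulVecLin.toContinuousLinearMap.hasFDerivAt.comp_hasDerivAt t hu)

/-- If the block matrix with upper blocks `T₁, T₂` and lower blocks `T₃, T₄` maps trajectories of
`(A, B)` to trajectories of `(A', B')`, then its blocks satisfy an algebraic relation at every
point `(z₀, u₀)` and for every linear input dynamics `u̇ = D u`. -/
theorem block_relation_of_maps_trajectories {n m : ℕ}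
    {A A' T₁ : Matrix (Fin n) (Fin n) ℝ} {B B' T₂ : Matrix (Fin n) (Fin m) ℝ}
    {T₃ : Matrix (Fin m) (Fin n) ℝ} {T₄ : Matrix (Fin m) (Fin m) ℝ}
    (h : ∀ (z : ℝ → Fin n → ℝ) (u : ℝ → Fin m → ℝ), Differentiable ℝ z → Differentiable ℝ u →
      (∀ t, deriv z t = A *ᵥ z t + B *ᵥ u t) →
      ∀ t, deriv (fun s => T₁ *ᵥ z s + T₂ *ᵥ u s) t =
        A' *ᵥ (T₁ *ᵥ z t + T₂ *ᵥ u t) + B' *ᵥ (T₃ *ᵥ z t + T₄ *ᵥ u t))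
    (D : Matrix (Fin m) (Fin m) ℝ) (z₀ : Fin n → ℝ) (u₀ : Fin m → ℝ) :
    T₁ *ᵥ (A *ᵥ z₀ + B *ᵥ u₀) + T₂ *ᵥ (D *ᵥ u₀) =
      A' *ᵥ (T₁ *ᵥ z₀ + T₂ *ᵥ u₀) + B' *ᵥ (T₃ *ᵥ z₀ + T₄ *ᵥ u₀) := by
  obtain ⟨w, hw₀, hw⟩ := Matrix.exists_hasDerivAt_mulVec (fromBlocks A B 0 D) (Sum.elim z₀ u₀)
  have hz : ∀ t, HasDerivAt (fun s => w s ∘ Sum.inl)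
      (A *ᵥ (w t ∘ Sum.inl) + B *ᵥ (w t ∘ Sum.inr)) t := fun t =>
    hasDerivAt_pi.2 fun i => by
      simpa [fromBlocks_mulVec] using hasDerivAt_pi.1 (hw t) (Sum.inl i)
  have hu : ∀ t, HasDerivAt (fun s => w s ∘ Sum.inr) (D *ᵥ (w t ∘ Sum.inr)) t := fun t =>
    hasDerivAt_pi.2 fun j => by
      simpa [fromBlocks_mulVec] using hasDerivAt_pi.1 (hw t) (Sum.inr j)
  have key := h _ _ (fun t => (hz t).differentiableAt) (fun t => (hu t).differentiableAt)
    (fun t => (hz t).deriv) 0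
  rw [(Matrix.hasDerivAt_mulVec_add_mulVec T₁ T₂ (hz 0) (hu 0)).deriv] at key
  simpa [hw₀] using key

/-- For two control systems without outputs `Λ = (A,B)` and
`Λ̃ = (A',B')`, the existence of an invertible matrix `T ∈ GL(n+m,ℝ)` mapping
trajectories of `Λ` exactly onto trajectories of `Λ̃` is equivalent to feedback
equivalence of `Λ` and `Λ̃`. -/
theorem stmt16 {n m : ℕ}
    (A A' : Matrix (Fin n) (Fin n) ℝ) (B B' : Matrix (Fin n) (Fin m) ℝ) :
    (∃ T : Matrix (Fin n ⊕ Fin m) (Fin n ⊕ Fin m) ℝ, IsUnit T.det ∧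
      ∀ (z : ℝ → (Fin n → ℝ)) (u : ℝ → (Fin m → ℝ)),
        Differentiable ℝ z → Differentiable ℝ u →
        ((∀ t : ℝ, deriv z t = A.mulVec (z t) + B.mulVec (u t)) ↔
          (∀ t : ℝ,
            deriv (fun s => fun i => T.mulVec (Sum.elim (z s) (u s)) (Sum.inl i)) t =
              A'.mulVec (fun i => T.mulVec (Sum.elim (z t) (u t)) (Sum.inl i)) +
              B'.mulVec (fun j => T.mulVec (Sum.elim (z t) (u t)) (Sum.inr j))))) ↔
    (∃ (Ts : Matrix (Fin n) (Fin n) ℝ) (Ti : Matrix (Fin m) (Fin m) ℝ)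
       (F : Matrix (Fin m) (Fin n) ℝ),
       IsUnit Ts.det ∧ IsUnit Ti.det ∧
       A' = Ts * (A + B * F) * Ts⁻¹ ∧ B' = Ts * B * Ti⁻¹) := by
  have hblocks : ∀ (T₁ : Matrix (Fin n) (Fin n) ℝ) (T₂ : Matrix (Fin n) (Fin m) ℝ)
      (T₃ : Matrix (Fin m) (Fin n) ℝ) (T₄ : Matrix (Fin m) (Fin m) ℝ) (a : Fin n → ℝ)
      (b : Fin m → ℝ),
      (∀ i, (fromBlocks T₁ T₂ T₃ T₄ *ᵥ Sum.elim a b) (Sum.inl i) = (T₁ *ᵥ a + T₂ *ᵥ b) i) ∧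
      ∀ j, (fromBlocks T₁ T₂ T₃ T₄ *ᵥ Sum.elim a b) (Sum.inr j) = (T₃ *ᵥ a + T₄ *ᵥ b) j := by
    simp [fromBlocks_mulVec]
  constructor
  · rintro ⟨T, hT, h⟩
    obtain ⟨T₁, T₂, T₃, T₄, rfl⟩ : ∃ T₁ T₂ T₃ T₄, T = fromBlocks T₁ T₂ T₃ T₄ :=
      ⟨_, _, _, _, (fromBlocks_toBlocks T).symm⟩
    simp only [(hblocks _ _ _ _ _ _).1, (hblocks _ _ _ _ _ _).2] at h
    have rel := block_relation_of_maps_trajectories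
      (fun z u hz hu => (h z u hz hu).1)
    have hT₂ : T₂ = 0 := by
      refine Matrix.mulVec_injective (funext fun v => ?_)
      have h₁ := rel 1 0 v
      have h₀ := rel 0 0 v
      rw [← h₀] at h₁
      simpa using h₁
    subst hT₂
    have hdet : IsUnit T₁.det ∧ IsUnit T₄.det := by
      rwa [det_fromBlocks_zero₁₂, IsUnit.mul_iff] at hT
    have hA : T₁ * A = A' * T₁ + B' * T₃ := by
      refine Matrix.mulVec_injective (funext fun v => ?_)
      simpa [← mulVec_mulVec, add_mulVec] using rel 0 v 0
    have hB : T₁ * B = B' * T₄ := by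
      refine Matrix.mulVec_injective (funext fun v => ?_)
      simpa [← mulVec_mulVec] using rel 0 0 v
    have hB' : B' = T₁ * B * T₄⁻¹ := by
      rw [hB, Matrix.mul_nonsing_inv_cancel_right _ _ hdet.2]
    refine ⟨T₁, T₄, -(T₄⁻¹ * T₃), hdet.1, hdet.2, ?_, hB'⟩
    have : T₁ * (A + B * -(T₄⁻¹ * T₃)) = A' * T₁ := by
      rw [Matrix.mul_add, hA, hB']
      simp [Matrix.mul_assoc]
    rw [this, Matrix.mul_nonsing_inv_cancel_right _ _ hdet.1]
  · rintro ⟨Ts, Ti, F, hTs, hTi, hA, hB⟩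
    refine ⟨fromBlocks Ts 0 (-(Ti * F)) Ti, ?_, fun z u hz hu => ?_⟩
    · rw [det_fromBlocks_zero₁₂]
      exact hTs.mul hTi
    simp only [(hblocks _ _ _ _ _ _).1, (hblocks _ _ _ _ _ _).2]
    refine forall_congr' fun t => ?_
    rw [(Matrix.hasDerivAt_mulVec_add_mulVec Ts 0 (hz t).hasDerivAt (hu t).hasDerivAt).deriv]
    have hA' : A' * Ts = Ts * A + Ts * B * F := by
      rw [hA, Matrix.nonsing_inv_mul_cancel_right _ _ hTs, Matrix.mul_add, Matrix.mul_assoc]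
    have hB' : B' * Ti = Ts * B := by
      rw [hB, Matrix.nonsing_inv_mul_cancel_right _ _ hTi]
    have hrhs : A' *ᵥ (Ts *ᵥ z t + (0 : Matrix (Fin n) (Fin m) ℝ) *ᵥ u t) +
        B' *ᵥ (-(Ti * F) *ᵥ z t + Ti *ᵥ u t) = Ts *ᵥ (A *ᵥ z t + B *ᵥ u t) := by
      simp only [zero_mulVec, add_zero, mulVec_add, mulVec_mulVec, mulVec_neg,
        ← Matrix.mul_assoc, hA', hB', add_mulVec, neg_mulVec]
      abel
    rw [hrhs, zero_mulVec, add_zero]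
    exact (Matrix.mulVec_injective_of_isUnit ((isUnit_iff_isUnit_det Ts).2 hTs)).eq_iff.symm
end
end

section
/- Let Δ = (E,H) with E,H ∈ ℝ^{l×n}, rank E = q, m = n−q, p = l−q, and let Λ = (A,B,C,D) be a (Q,P)-explicitation of Δ. Then for every i ∈ ℕ there exists a matrix F_i ∈ ℝ^{m×q} such that (A + BF_i)𝒱_{i+1}(Λ) ⊆ 𝒱_i(Λ), (C + DF_i)𝒱_{i+1}(Λ) = {0}, and P𝒱_{i+1}(Δ) = {(v, F_i v + u) : v ∈ 𝒱_{i+1}(Λ), u ∈ 𝒰_i(Λ)}, where 𝒱_{i+1}(Δ) is the first Wong sequence of Δ. -/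
noncomputable section

open Matrix

/-- For a system `Λ = (A,B,C,D)`:
`𝒱₀(Λ) = ℝ^q`, `𝒱_{i+1}(Λ) = [A;C]⁻¹((𝒱_i(Λ)×{0}) + Im [B;D])`. -/
def sysV {q m p : ℕ} (A : Matrix (Fin q) (Fin q) ℝ) (B : Matrix (Fin q) (Fin m) ℝ)
    (C : Matrix (Fin p) (Fin q) ℝ) (D : Matrix (Fin p) (Fin m) ℝ) :
    ℕ → Submodule ℝ (Fin q → ℝ)
  | 0 => ⊤
  | i + 1 => Submodule.comap (Matrix.fromRows A C).mulVecLin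
      (Submodule.map (Matrix.fromRows (1 : Matrix (Fin q) (Fin q) ℝ)
          (0 : Matrix (Fin p) (Fin q) ℝ)).mulVecLin (sysV A B C D i)
        ⊔ LinearMap.range (Matrix.fromRows B D).mulVecLin)

/-- `𝒰_i(Λ) = [B;D]⁻¹(𝒱_i(Λ)×{0})`. -/
def sysU {q m p : ℕ} (A : Matrix (Fin q) (Fin q) ℝ) (B : Matrix (Fin q) (Fin m) ℝ)
    (C : Matrix (Fin p) (Fin q) ℝ) (D : Matrix (Fin p) (Fin m) ℝ) (i : ℕ) :
    Submodule ℝ (Fin m → ℝ) :=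
  Submodule.comap (Matrix.fromRows B D).mulVecLin
    (Submodule.map (Matrix.fromRows (1 : Matrix (Fin q) (Fin q) ℝ)
      (0 : Matrix (Fin p) (Fin q) ℝ)).mulVecLin (sysV A B C D i))

/-- A linear relation over a field admits a linear selection defined on the whole space. -/
theorem exists_linear_selection {K X Y : Type*} [Field K] [AddCommGroup X] [Module K X]
    [AddCommGroup Y] [Module K Y] (W : Submodule K (X × Y)) :
    ∃ f : X →ₗ[K] Y, ∀ x y, (x, y) ∈ W → (x, f x) ∈ W := by
  let π : W →ₗ[K] X := (LinearMap.fst K X Y).comp W.subtype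
  obtain ⟨g, hg⟩ := π.rangeRestrict.exists_rightInverse_of_surjective
    (LinearMap.range_rangeRestrict π)
  obtain ⟨f, hf⟩ := LinearMap.exists_extend (((LinearMap.snd K X Y).comp W.subtype).comp g)
  refine ⟨f, fun x y hxy => ?_⟩
  let z : LinearMap.range π := ⟨x, ⟨⟨(x, y), hxy⟩, rfl⟩⟩
  have hfst : (g z : X × Y).1 = x := congrArg Subtype.val (LinearMap.congr_fun hg z)
  have hsnd : f x = (g z : X × Y).2 := LinearMap.congr_fun hf z
  have hz : (x, f x) = (g z : X × Y) := Prod.ext hfst.symm hsnd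
  exact hz ▸ (g z).2

section System

variable {q m p : ℕ} (A : Matrix (Fin q) (Fin q) ℝ) (B : Matrix (Fin q) (Fin m) ℝ)
  (C : Matrix (Fin p) (Fin q) ℝ) (D : Matrix (Fin p) (Fin m) ℝ)

/-- The pairs `(x, u)` of a state and an input with `Ax + Bu ∈ 𝒱_i(Λ)` and `Cx + Du = 0`. -/
def admissiblePairs (i : ℕ) : Submodule ℝ ((Fin q → ℝ) × (Fin m → ℝ)) :=
  (sysV A B C D i).comap (A.mulVecLin.coprod B.mulVecLin) ⊓
    LinearMap.ker (C.mulVecLin.coprod D.mulVecLin)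

variable {A B C D}

theorem mem_admissiblePairs {i : ℕ} {x : Fin q → ℝ} {u : Fin m → ℝ} :
    (x, u) ∈ admissiblePairs A B C D i ↔
      A *ᵥ x + B *ᵥ u ∈ sysV A B C D i ∧ C *ᵥ x + D *ᵥ u = 0 := by
  simp [admissiblePairs]

theorem elim_mem_map_fromRows_one_zero {V : Submodule ℝ (Fin q → ℝ)} {x : Fin q → ℝ}
    {y : Fin p → ℝ} :
    Sum.elim x y ∈ V.map (Matrix.fromRows (1 : Matrix (Fin q) (Fin q) ℝ)
      (0 : Matrix (Fin p) (Fin q) ℝ)).mulVecLin ↔ x ∈ V ∧ y = 0 := by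
  simp only [Submodule.mem_map, Matrix.mulVecLin_apply, Matrix.fromRows_mulVec,
    Matrix.one_mulVec, Matrix.zero_mulVec, Sum.elim_eq_iff]
  constructor
  · rintro ⟨v, hv, rfl, rfl⟩
    exact ⟨hv, rfl⟩
  · rintro ⟨hx, rfl⟩
    exact ⟨x, hx, rfl, rfl⟩

theorem mem_sysU {i : ℕ} {u : Fin m → ℝ} :
    u ∈ sysU A B C D i ↔ (0, u) ∈ admissiblePairs A B C D i := by
  rw [sysU, Submodule.mem_comap, Matrix.mulVecLin_apply, Matrix.fromRows_mulVec,
    elim_mem_map_fromRows_one_zero, mem_admissiblePairs]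
  simp

theorem mem_sysV_succ {i : ℕ} {x : Fin q → ℝ} :
    x ∈ sysV A B C D (i + 1) ↔ ∃ u, (x, u) ∈ admissiblePairs A B C D i := by
  have hsplit (u : Fin m → ℝ) :
      Matrix.fromRows A C *ᵥ x + Matrix.fromRows B D *ᵥ u =
        Sum.elim (A *ᵥ x + B *ᵥ u) (C *ᵥ x + D *ᵥ u) := by
    ext (j | j) <;> simp [Matrix.fromRows_mulVec]
  rw [sysV, Submodule.mem_comap, Submodule.mem_sup]
  simp only [mem_admissiblePairs, ← elim_mem_map_fromRows_one_zero, ← hsplit]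
  constructor
  · rintro ⟨v, hv, _, ⟨u, rfl⟩, h⟩
    refine ⟨-u, ?_⟩
    rw [Matrix.mulVecLin_apply, Matrix.mulVecLin_apply] at h
    rwa [Matrix.mulVec_neg, ← h, add_neg_cancel_right]
  · rintro ⟨u, hu⟩
    refine ⟨_, hu, _, ⟨-u, rfl⟩, ?_⟩
    simp [Matrix.mulVec_neg]

/-- One step of the Wong sequence in the coordinates given by `Q` and `P`. -/
theorem mem_map_wongV_succ {L N : Type*} [Fintype L] [DecidableEq L] [Fintype N] [DecidableEq N]
    {E H : Matrix L N ℝ} {Q : Matrix L L ℝ} {P : Matrix N N ℝ}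
    (hQ : IsUnit Q.det) (hP : IsUnit P.det) {i : ℕ} {w : N → ℝ} :
    w ∈ (wongV E H (i + 1)).map P.mulVecLin ↔
      ∃ z ∈ (wongV E H i).map P.mulVecLin, (Q * E * P⁻¹) *ᵥ z = (Q * H * P⁻¹) *ᵥ w := by
  have hPinv (v : N → ℝ) : P⁻¹ *ᵥ (P *ᵥ v) = v := by
    rw [Matrix.mulVec_mulVec, Matrix.nonsing_inv_mul _ hP, Matrix.one_mulVec]
  have hQinj : Function.Injective Q.mulVec :=
    Matrix.mulVec_injective_of_isUnit ((Matrix.isUnit_iff_isUnit_det Q).2 hQ)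
  simp only [wongV, Submodule.mem_map, Submodule.mem_comap, Matrix.mulVecLin_apply,
    ← Matrix.mulVec_mulVec]
  constructor
  · rintro ⟨y, ⟨v, hv, hvy⟩, rfl⟩
    refine ⟨_, ⟨v, hv, rfl⟩, ?_⟩
    rw [hPinv, hPinv, hvy]
  · rintro ⟨_, ⟨v, hv, rfl⟩, h⟩
    refine ⟨P⁻¹ *ᵥ w, ⟨v, hv, ?_⟩, ?_⟩
    · rw [hPinv] at h
      exact hQinj h
    · rw [Matrix.mulVec_mulVec, Matrix.mul_nonsing_inv _ hP, Matrix.one_mulVec]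

theorem elim_mem_map_wongV_succ
    {E H : Matrix (Fin q ⊕ Fin p) (Fin q ⊕ Fin m) ℝ}
    {Q : Matrix (Fin q ⊕ Fin p) (Fin q ⊕ Fin p) ℝ}
    {P : Matrix (Fin q ⊕ Fin m) (Fin q ⊕ Fin m) ℝ}
    (hQ : IsUnit Q.det) (hP : IsUnit P.det)
    (hexpE : Q * E * P⁻¹ = Matrix.fromBlocks 1 0 0 0)
    (hexpH : Q * H * P⁻¹ = Matrix.fromBlocks A B C D) (i : ℕ) (x : Fin q → ℝ) (u : Fin m → ℝ) :
    Sum.elim x u ∈ (wongV E H (i + 1)).map P.mulVecLin ↔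
      (x, u) ∈ admissiblePairs A B C D i := by
  have hproj : (∀ y : Fin q → ℝ,
      (∃ v : Fin m → ℝ, Sum.elim y v ∈ (wongV E H i).map P.mulVecLin) ↔
        y ∈ sysV A B C D i) := by
    cases i with
    | zero =>
      intro y
      refine ⟨fun _ => Submodule.mem_top, fun _ => ⟨0, P⁻¹ *ᵥ Sum.elim y 0,
        Submodule.mem_top, ?_⟩⟩
      rw [Matrix.mulVecLin_apply, Matrix.mulVec_mulVec, Matrix.mul_nonsing_inv _ hP,
        Matrix.one_mulVec]
    | succ i =>
      intro y
      simp only [elim_mem_map_wongV_succ hQ hP hexpE hexpH i, mem_sysV_succ]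
  rw [mem_map_wongV_succ hQ hP, hexpE, hexpH, mem_admissiblePairs, ← hproj]
  simp only [Matrix.fromBlocks_mulVec, Sum.elim_comp_inl, Sum.elim_comp_inr, Matrix.one_mulVec,
    Matrix.zero_mulVec, add_zero, Sum.elim_eq_iff]
  constructor
  · rintro ⟨z, hz, h, h'⟩
    refine ⟨⟨z ∘ Sum.inr, ?_⟩, h'.symm⟩
    rwa [← h, Sum.elim_comp_inl_inr]
  · rintro ⟨⟨v, hv⟩, h⟩
    exact ⟨_, hv, Sum.elim_comp_inl _ _, h.symm⟩

end System

/-- For each `i` there is `F_i ∈ ℝ^{m×q}` with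
`(A+BF_i)𝒱_{i+1}(Λ) ⊆ 𝒱_i(Λ)`, `(C+DF_i)𝒱_{i+1}(Λ) = 0`, and
`P𝒱_{i+1}(Δ) = {(v, F_i v + u) : v ∈ 𝒱_{i+1}(Λ), u ∈ 𝒰_i(Λ)}`. -/
theorem stmt17 {q m p : ℕ}
    (E H : Matrix (Fin q ⊕ Fin p) (Fin q ⊕ Fin m) ℝ) (hE : E.rank = q)
    (Q : Matrix (Fin q ⊕ Fin p) (Fin q ⊕ Fin p) ℝ)
    (P : Matrix (Fin q ⊕ Fin m) (Fin q ⊕ Fin m) ℝ)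
    (hQ : IsUnit Q.det) (hP : IsUnit P.det)
    (A : Matrix (Fin q) (Fin q) ℝ) (B : Matrix (Fin q) (Fin m) ℝ)
    (C : Matrix (Fin p) (Fin q) ℝ) (D : Matrix (Fin p) (Fin m) ℝ)
    (hexpE : Q * E * P⁻¹ = Matrix.fromBlocks 1 0 0 0)
    (hexpH : Q * H * P⁻¹ = Matrix.fromBlocks A B C D) :
    ∀ i : ℕ, ∃ F : Matrix (Fin m) (Fin q) ℝ,
      Submodule.map (A + B * F).mulVecLin (sysV A B C D (i + 1)) ≤ sysV A B C D i ∧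
      Submodule.map (C + D * F).mulVecLin (sysV A B C D (i + 1)) = ⊥ ∧
      Submodule.map P.mulVecLin (wongV E H (i + 1)) =
        Submodule.map (Matrix.fromRows (1 : Matrix (Fin q) (Fin q) ℝ) F).mulVecLin
          (sysV A B C D (i + 1)) ⊔
        Submodule.map (Matrix.fromRows (0 : Matrix (Fin q) (Fin m) ℝ)
          (1 : Matrix (Fin m) (Fin m) ℝ)).mulVecLin (sysU A B C D i) := by
  intro i
  obtain ⟨f, hf⟩ := exists_linear_selection (admissiblePairs A B C D i)
  set F := LinearMap.toMatrix' f
  have hsel (x : Fin q → ℝ) (hx : x ∈ sysV A B C D (i + 1)) :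
      (x, F *ᵥ x) ∈ admissiblePairs A B C D i := by
    obtain ⟨u, hu⟩ := mem_sysV_succ.1 hx
    rw [LinearMap.toMatrix'_mulVec]
    exact hf x u hu
  refine ⟨F, ?_, ?_, ?_⟩
  · rintro _ ⟨x, hx, rfl⟩
    rw [Matrix.mulVecLin_apply, Matrix.add_mulVec, ← Matrix.mulVec_mulVec]
    exact (mem_admissiblePairs.1 (hsel x hx)).1
  · rw [eq_bot_iff]
    rintro _ ⟨x, hx, rfl⟩
    rw [Matrix.mulVecLin_apply, Matrix.add_mulVec, ← Matrix.mulVec_mulVec]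
    exact (mem_admissiblePairs.1 (hsel x hx)).2
  · ext w
    obtain ⟨x, u, rfl⟩ : ∃ x u, w = Sum.elim x u := ⟨_, _, (Sum.elim_comp_inl_inr w).symm⟩
    have hsplit (v : Fin q → ℝ) (y : Fin m → ℝ) :
        Matrix.fromRows 1 F *ᵥ v + Matrix.fromRows 0 1 *ᵥ y = Sum.elim v (F *ᵥ v + y) := by
      ext (j | j) <;> simp [Matrix.fromRows_mulVec]
    rw [elim_mem_map_wongV_succ hQ hP hexpE hexpH, Submodule.mem_sup]
    constructor
    · intro h
      have hx := mem_sysV_succ.2 ⟨u, h⟩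
      refine ⟨_, ⟨x, hx, rfl⟩, _, ⟨u - F *ᵥ x, mem_sysU.2 ?_, rfl⟩, ?_⟩
      · simpa using sub_mem h (hsel x hx)
      · rw [Matrix.mulVecLin_apply, Matrix.mulVecLin_apply, hsplit, add_sub_cancel]
    · rintro ⟨_, ⟨v, hv, rfl⟩, _, ⟨y, hy, rfl⟩, h⟩
      rw [Matrix.mulVecLin_apply, Matrix.mulVecLin_apply, hsplit, Sum.elim_eq_iff] at h
      obtain ⟨rfl, rfl⟩ := h
      simpa using add_mem (hsel v hv) (mem_sysU.1 hy)
end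
end
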